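/- Assume the propensity satisfies e(x) > 0 for all x ∈ ℝ^d. Then for every classifier g, the SAR loss is unbiased: E[r_SAR(g,(X,S))] = P(g(X) ≠ Y); consequently, for an i.i.d. sample (X_1,S_1),…,(X_n,S_n), E[R̂_n^SAR(g)] = P(g(X) ≠ Y). -/

import Mathlib

open MeasureTheory ProbabilityTheory Real Filter Topology

noncomputable section

/-- A classifier: a measurable `{0,1}`-valued function on the feature space. -/
def IsClassifier {α : Type*} [MeasurableSpace α] (g : α → ℝ) : Prop :=
  Measurable g ∧ ∀ x, g x = 0 ∨ g x = 1

/-- `η` is a version of the regression function `x ↦ P(Y = 1 ∣ X = x)`. -/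
def IsRegression {Ω α : Type*} [MeasurableSpace Ω] [MeasurableSpace α]
    (P : Measure Ω) (X : Ω → α) (Y : Ω → ℝ) (η : α → ℝ) : Prop :=
  Measurable η ∧ (∀ x, 0 ≤ η x ∧ η x ≤ 1) ∧
    ∀ A : Set α, MeasurableSet A →
      ∫ ω in X ⁻¹' A, Y ω ∂P = ∫ ω in X ⁻¹' A, η (X ω) ∂P

/-- `e` is the propensity: `P(S = 1 ∣ Y = 1, X = x) = e x` and
`P(S = 1 ∣ Y = 0, X = x) = 0` (the latter is equivalent to `S ≤ Y` a.s.). -/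
def IsPropensity {Ω α : Type*} [MeasurableSpace Ω] [MeasurableSpace α]
    (P : Measure Ω) (X : Ω → α) (Y S : Ω → ℝ) (e : α → ℝ) : Prop :=
  Measurable e ∧ (∀ x, 0 ≤ e x ∧ e x ≤ 1) ∧
    (∀ᵐ ω ∂P, S ω ≤ Y ω) ∧
    ∀ A : Set α, MeasurableSet A →
      ∫ ω in X ⁻¹' A, S ω ∂P = ∫ ω in X ⁻¹' A, e (X ω) * Y ω ∂P

/-- Misclassification risk `R(g) = P(g(X) ≠ Y)`. -/
def risk {Ω α : Type*} [MeasurableSpace Ω]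
    (P : Measure Ω) (X : Ω → α) (Y : Ω → ℝ) (g : α → ℝ) : ℝ :=
  (P {ω | g (X ω) ≠ Y ω}).toReal

/-- The Bayes classifier `g*(x) = 1{η(x) ≥ 1/2}`. -/
def bayes {α : Type*} (η : α → ℝ) : α → ℝ := fun x => if (1 : ℝ) / 2 ≤ η x then 1 else 0

/-- Excess risk `ℓ(g, g*) = R(g) − R(g*)`. -/
def excessRisk {Ω α : Type*} [MeasurableSpace Ω]
    (P : Measure Ω) (X : Ω → α) (Y : Ω → ℝ) (η : α → ℝ) (g : α → ℝ) : ℝ :=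
  risk P X Y g - risk P X Y (bayes η)

/-- The SAR loss `r_SAR(g,(x,s)) = (1{s=1}/e(x))·(2·1{g(x)≠1} − 1) + 1{g(x)≠0}`. -/
def rSAR {α : Type*} (e : α → ℝ) (g : α → ℝ) (p : α × ℝ) : ℝ :=
  (if p.2 = 1 then (1 : ℝ) else 0) / e p.1 * (2 * (if g p.1 ≠ 1 then (1 : ℝ) else 0) - 1)
    + (if g p.1 ≠ 0 then (1 : ℝ) else 0)

/-- Empirical risk `(1/n)·Σ_{i=1}^n r(g,(X_i,S_i))` of a generic loss `r` on an `n`-sample. -/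
def empRisk {Ω α : Type*} (r : (α → ℝ) → α × ℝ → ℝ) (X : Ω → α) (S : Ω → ℝ) (n : ℕ)
    (g : α → ℝ) (ω : Fin n → Ω) : ℝ :=
  (1 / (n : ℝ)) * ∑ i : Fin n, r g (X (ω i), S (ω i))

/-- A finite set of points is shattered by the class `𝒮`: every labeling is realized. -/
def Shatters {α : Type*} (𝒮 : Set (α → ℝ)) {k : ℕ} (x : Fin k → α) : Prop :=
  ∀ b : Fin k → Bool, ∃ g ∈ 𝒮, ∀ i, g (x i) = if b i then 1 else 0

/-- The class `𝒮` has VC dimension exactly `V`. -/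
def HasVCDim {α : Type*} (𝒮 : Set (α → ℝ)) (V : ℕ) : Prop :=
  (∃ x : Fin V → α, Shatters 𝒮 x) ∧ ∀ x : Fin (V + 1) → α, ¬ Shatters 𝒮 x

/-- Separability assumption (A₁): a countable subclass `𝒮' ⊆ 𝒮` that is dense in
the sense of pointwise convergence of the loss `r`. -/
def SeparableClass {α : Type*} (r : (α → ℝ) → α × ℝ → ℝ) (𝒮 𝒮' : Set (α → ℝ)) : Prop :=
  𝒮' ⊆ 𝒮 ∧ 𝒮'.Countable ∧
    ∀ g ∈ 𝒮, ∃ u : ℕ → α → ℝ, (∀ k, u k ∈ 𝒮') ∧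
      ∀ p : α × ℝ, Tendsto (fun k => r (u k) p) atTop (𝓝 (r g p))

/-- The set of admissible distributions for the minimax risk: `μ` is the joint law of
`(X, Y, S)`, with regression function `η` satisfying the Massart noise condition with
margin `h`, Bayes classifier in `𝒮`, and propensity `e`. -/
def PUAdmissible {α : Type*} [MeasurableSpace α] (e : α → ℝ) (𝒮 : Set (α → ℝ)) (h : ℝ)
    (μ : Measure (α × ℝ × ℝ)) (η : α → ℝ) : Prop :=
  IsProbabilityMeasure μ ∧
    (∀ᵐ p ∂μ, (p.2.1 = 0 ∨ p.2.1 = 1) ∧ (p.2.2 = 0 ∨ p.2.2 = 1)) ∧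
    IsRegression μ (fun p => p.1) (fun p => p.2.1) η ∧
    IsPropensity μ (fun p => p.1) (fun p => p.2.1) (fun p => p.2.2) e ∧
    bayes η ∈ 𝒮 ∧ (∀ x, h ≤ |2 * η x - 1|)

/-- Minimax risk: infimum over estimators (functions of the observed `(X_i, S_i)` sample,
valued in `𝒮`) of the supremum over admissible distributions of the expected excess risk. -/
def minimaxRisk {α : Type*} [MeasurableSpace α] (e : α → ℝ) (𝒮 : Set (α → ℝ)) (h : ℝ)
    (n : ℕ) : ℝ :=
  ⨅ ghat : {f : (Fin n → α × ℝ) → α → ℝ // ∀ z, f z ∈ 𝒮},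
    ⨆ q : {q : Measure (α × ℝ × ℝ) × (α → ℝ) // PUAdmissible e 𝒮 h q.1 q.2},
      ∫ z, excessRisk q.1.1 (fun p => p.1) (fun p => p.2.1) q.1.2 (ghat.1 z)
        ∂(Measure.pi fun _ : Fin n => q.1.1.map (fun p => (p.1, p.2.2)))

/-- Change of weights in `ℝ≥0∞`: the propensity identity tested against any function. -/
lemma lintegral_propensity {Ω α : Type*} [MeasurableSpace Ω] [MeasurableSpace α]
    (P : Measure Ω) [IsProbabilityMeasure P] (X : Ω → α) (Y S : Ω → ℝ) (e : α → ℝ)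
    (hX : Measurable X) (hY : Measurable Y) (hS : Measurable S)
    (hYb : ∀ᵐ ω ∂P, Y ω = 0 ∨ Y ω = 1) (hSb : ∀ᵐ ω ∂P, S ω = 0 ∨ S ω = 1)
    (hprop : IsPropensity P X Y S e) (f : α → ENNReal) (hf : Measurable f) :
    ∫⁻ ω, ENNReal.ofReal (S ω) * f (X ω) ∂P =
      ∫⁻ ω, ENNReal.ofReal (e (X ω) * Y ω) * f (X ω) ∂P := by
  obtain ⟨hem, heb, -, hA⟩ := hprop
  have hWm : Measurable (fun ω => e (X ω) * Y ω) := (hem.comp hX).mul hY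
  have hS0 : ∀ᵐ ω ∂P, 0 ≤ S ω ∧ S ω ≤ 1 := by
    filter_upwards [hSb] with ω h
    rcases h with h | h <;> rw [h] <;> norm_num
  have hW0 : ∀ᵐ ω ∂P, 0 ≤ e (X ω) * Y ω ∧ e (X ω) * Y ω ≤ 1 := by
    filter_upwards [hYb] with ω h
    have := heb (X ω)
    rcases h with h | h <;> rw [h] <;> simp [this]
  have hSi : Integrable S P := Integrable.of_bound hS.aestronglyMeasurable 1 (by
    filter_upwards [hS0] with ω h
    rw [Real.norm_eq_abs, abs_of_nonneg h.1]; exact h.2)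
  have hWi : Integrable (fun ω => e (X ω) * Y ω) P :=
    Integrable.of_bound hWm.aestronglyMeasurable 1 (by
      filter_upwards [hW0] with ω h
      rw [Real.norm_eq_abs, abs_of_nonneg h.1]; exact h.2)
  have key : (P.withDensity (fun ω => ENNReal.ofReal (S ω))).map X =
      (P.withDensity (fun ω => ENNReal.ofReal (e (X ω) * Y ω))).map X := by
    ext A hAm
    rw [Measure.map_apply hX hAm, Measure.map_apply hX hAm,
      withDensity_apply _ (hX hAm), withDensity_apply _ (hX hAm),
      ← ofReal_integral_eq_lintegral_ofReal hSi.integrableOn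
        (ae_restrict_of_ae (hS0.mono fun _ h => h.1)),
      ← ofReal_integral_eq_lintegral_ofReal hWi.integrableOn
        (ae_restrict_of_ae (hW0.mono fun _ h => h.1)), hA A hAm]
  have hfX : Measurable (fun ω => f (X ω)) := hf.comp hX
  have h := congrArg (fun μ => ∫⁻ x, f x ∂μ) key
  rw [lintegral_map hf hX, lintegral_map hf hX,
    lintegral_withDensity_eq_lintegral_mul _ hS.ennreal_ofReal hfX,
    lintegral_withDensity_eq_lintegral_mul _ hWm.ennreal_ofReal hfX] at h
  simpa using h

/-- Inverse-propensity weighting: for `0 ≤ φ ≤ 1`, `E[S/e(X) φ(X)] = E[Y φ(X)]`. -/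
lemma ipw {Ω α : Type*} [MeasurableSpace Ω] [MeasurableSpace α]
    (P : Measure Ω) [IsProbabilityMeasure P] (X : Ω → α) (Y S : Ω → ℝ) (e : α → ℝ)
    (hX : Measurable X) (hY : Measurable Y) (hS : Measurable S)
    (hYb : ∀ᵐ ω ∂P, Y ω = 0 ∨ Y ω = 1) (hSb : ∀ᵐ ω ∂P, S ω = 0 ∨ S ω = 1)
    (hprop : IsPropensity P X Y S e) (he : ∀ x, 0 < e x)
    (φ : α → ℝ) (hφ : Measurable φ) (h0 : ∀ x, 0 ≤ φ x) (h1 : ∀ x, φ x ≤ 1) :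
    Integrable (fun ω => S ω / e (X ω) * φ (X ω)) P ∧
    Integrable (fun ω => Y ω * φ (X ω)) P ∧
      ∫ ω, S ω / e (X ω) * φ (X ω) ∂P = ∫ ω, Y ω * φ (X ω) ∂P := by
  have hem : Measurable e := hprop.1
  have hm1 : Measurable (fun ω => S ω / e (X ω) * φ (X ω)) :=
    (hS.div (hem.comp hX)).mul (hφ.comp hX)
  have hm2 : Measurable (fun ω => Y ω * φ (X ω)) := hY.mul (hφ.comp hX)
  have hn1 : ∀ᵐ ω ∂P, 0 ≤ S ω / e (X ω) * φ (X ω) := by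
    filter_upwards [hSb] with ω h
    have := he (X ω)
    have := h0 (X ω)
    rcases h with h | h <;> rw [h] <;> positivity
  have hn2 : ∀ᵐ ω ∂P, 0 ≤ Y ω * φ (X ω) := by
    filter_upwards [hYb] with ω h
    have := h0 (X ω)
    rcases h with h | h <;> rw [h] <;> positivity
  have hi2 : Integrable (fun ω => Y ω * φ (X ω)) P :=
    Integrable.of_bound hm2.aestronglyMeasurable 1 (by
      filter_upwards [hYb] with ω h
      have := h0 (X ω)
      have := h1 (X ω)
      rcases h with h | h <;> rw [h] <;> simp [abs_of_nonneg, *])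
  have hl : ∫⁻ ω, ENNReal.ofReal (S ω / e (X ω) * φ (X ω)) ∂P =
      ∫⁻ ω, ENNReal.ofReal (Y ω * φ (X ω)) ∂P := by
    have h := lintegral_propensity P X Y S e hX hY hS hYb hSb hprop
      (fun x => ENNReal.ofReal (φ x / e x)) (hφ.div hem).ennreal_ofReal
    calc _ = _ := lintegral_congr_ae ?_
      _ = _ := h
      _ = _ := lintegral_congr_ae ?_
    · filter_upwards [hSb] with ω hω
      rw [← ENNReal.ofReal_mul (by rcases hω with h | h <;> rw [h]; norm_num)]
      congr 1; ring
    · filter_upwards [hYb] with ω hω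
      have hp := he (X ω)
      rw [← ENNReal.ofReal_mul (by rcases hω with h | h <;> rw [h] <;> simp [hp.le])]
      congr 1; field_simp
  refine ⟨⟨hm1.aestronglyMeasurable, ?_⟩, hi2, ?_⟩
  · rw [hasFiniteIntegral_iff_ofReal hn1, hl, ← hasFiniteIntegral_iff_ofReal hn2]
    exact hi2.2
  · rw [integral_eq_lintegral_of_nonneg_ae hn1 hm1.aestronglyMeasurable,
      integral_eq_lintegral_of_nonneg_ae hn2 hm2.aestronglyMeasurable, hl]

/-- **Unbiasedness of the SAR risk.** If the propensity satisfies `e(x) > 0`, then for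
every classifier `g` the SAR loss is unbiased, `E[r_SAR(g,(X,S))] = P(g(X) ≠ Y)`, and
consequently the empirical SAR risk on an i.i.d. `n`-sample has expectation
`P(g(X) ≠ Y)`. -/
theorem rSAR_unbiased
    (dim : ℕ) (Ω : Type*) [MeasurableSpace Ω] (P : Measure Ω) [IsProbabilityMeasure P]
    (X : Ω → (Fin dim → ℝ)) (Y S : Ω → ℝ) (η e : (Fin dim → ℝ) → ℝ)
    (g : (Fin dim → ℝ) → ℝ) (n : ℕ)
    (hX : Measurable X) (hY : Measurable Y) (hS : Measurable S)
    (hYb : ∀ᵐ ω ∂P, Y ω = 0 ∨ Y ω = 1) (hSb : ∀ᵐ ω ∂P, S ω = 0 ∨ S ω = 1)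
    (hreg : IsRegression P X Y η) (hprop : IsPropensity P X Y S e)
    (he : ∀ x, 0 < e x) (hg : IsClassifier g) (hn : 0 < n) :
    (∫ ω, rSAR e g (X ω, S ω) ∂P = risk P X Y g) ∧
      ∫ ω, empRisk (rSAR e) X S n g ω ∂(Measure.pi fun _ : Fin n => P) =
        risk P X Y g := by
  have hgm : Measurable g := hg.1
  have hφm : Measurable (fun x => if g x ≠ 1 then (1 : ℝ) else 0) :=
    Measurable.ite (hgm (measurableSet_singleton (1 : ℝ)).compl) measurable_const measurable_const
  have hψm : Measurable (fun x => if g x ≠ 0 then (1 : ℝ) else 0) :=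
    Measurable.ite (hgm (measurableSet_singleton (0 : ℝ)).compl) measurable_const measurable_const
  obtain ⟨a1, a2, a3⟩ := ipw P X Y S e hX hY hS hYb hSb hprop he
    (fun x => if g x ≠ 1 then (1 : ℝ) else 0) hφm
    (fun x => by split_ifs <;> norm_num)
    (fun x => by split_ifs <;> norm_num)
  obtain ⟨b1, b2, b3⟩ := ipw P X Y S e hX hY hS hYb hSb hprop he
    (fun _ => 1) measurable_const (fun _ => zero_le_one) (fun _ => le_rfl)
  have c1 : Integrable (fun ω => if g (X ω) ≠ 0 then (1 : ℝ) else 0) P :=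
    Integrable.of_bound (hψm.comp hX).aestronglyMeasurable 1
      (Eventually.of_forall fun ω => by split_ifs <;> simp)
  have hr : (fun ω => rSAR e g (X ω, S ω)) =ᵐ[P] fun ω =>
      2 * (S ω / e (X ω) * (if g (X ω) ≠ 1 then (1 : ℝ) else 0)) - S ω / e (X ω) * 1
        + (if g (X ω) ≠ 0 then (1 : ℝ) else 0) := by
    filter_upwards [hSb] with ω hω
    have hs : (if S ω = 1 then (1 : ℝ) else 0) = S ω := by
      rcases hω with h | h <;> simp [h]
    simp only [rSAR, hs]
    ring
  have hri : Integrable (fun ω => rSAR e g (X ω, S ω)) P :=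
    (((a1.const_mul 2).sub b1).add c1).congr hr.symm
  have hset : MeasurableSet {ω | g (X ω) ≠ Y ω} :=
    (measurableSet_eq_fun (hgm.comp hX) hY).compl
  have main : ∫ ω, rSAR e g (X ω, S ω) ∂P = risk P X Y g := by
    have hrisk : risk P X Y g =
        ∫ ω, (2 * (Y ω * (if g (X ω) ≠ 1 then (1 : ℝ) else 0)) - Y ω * 1
          + (if g (X ω) ≠ 0 then (1 : ℝ) else 0)) ∂P := by
      have : risk P X Y g = ∫ ω, ({ω | g (X ω) ≠ Y ω}).indicator (fun _ => (1 : ℝ)) ω ∂P := by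
        rw [integral_indicator hset]
        simp [risk, Measure.real]
      rw [this]
      apply integral_congr_ae
      filter_upwards [hYb] with ω hω
      simp only [Set.indicator, Set.mem_ofPred_eq]
      rcases hω with h | h <;> rcases hg.2 (X ω) with h' | h' <;> simp [h, h'] <;> norm_num
    have split : ∀ u v w : Ω → ℝ, Integrable u P → Integrable v P → Integrable w P →
        ∫ ω, (2 * u ω - v ω + w ω) ∂P = 2 * ∫ ω, u ω ∂P - ∫ ω, v ω ∂P + ∫ ω, w ω ∂P := by
      intro u v w hu hv hw
      have hd : Integrable (fun ω => 2 * u ω - v ω) P := (hu.const_mul 2).sub hv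
      rw [integral_add hd hw, integral_sub (hu.const_mul 2) hv, integral_const_mul]
    rw [hrisk, integral_congr_ae hr, split _ _ _ a1 b1 c1, split _ _ _ a2 b2 c1, a3, b3]
  refine ⟨main, ?_⟩
  have hn' : (n : ℝ) ≠ 0 := by exact_mod_cast hn.ne'
  simp only [empRisk]
  rw [integral_const_mul, integral_finsetSum]
  · have : ∀ i : Fin n, ∫ ω : Fin n → Ω, rSAR e g (X (ω i), S (ω i))
        ∂(Measure.pi fun _ : Fin n => P) = risk P X Y g := fun i => by
      rw [← main]
      exact integral_comp_eval (μ := fun _ : Fin n => P) (i := i)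
        (f := fun ω => rSAR e g (X ω, S ω)) hri.aestronglyMeasurable
    rw [Finset.sum_congr rfl fun i _ => this i]
    simp [hn']
  · intro i _
    exact integrable_comp_eval (μ := fun _ : Fin n => P) (i := i)
        (f := fun ω => rSAR e g (X ω, S ω)) hri
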